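/- (Shattering Lemma.) Let H ≤ G = 𝔽₂ⁿ be a subgroup and g₁, g₂, g₃ ∈ G with g₁+g₂+g₃ = 0. Let A ⊆ G have densities d₁ = |A ∩ (H+g₁)|/|H|, d₂ = |A ∩ (H+g₂)|/|H|, d₃ = |A ∩ (H+g₃)|/|H|, and set ρ = d₂d₃/4. Then either A contains at least (1/8)·d₁d₂d₃·|H|² triangles, or there is a subgroup H' ≤ H such that H' (1/20, 3/4, log_{1+ρ}(2/d₁))-shatters A on at least one of the cosets H+g₂ or H+g₃. -/

import Mathlib

open scoped Classical BigOperators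

noncomputable section

/-- The group `G = 𝔽₂ⁿ`. -/
abbrev G (n : ℕ) : Type := Fin n → ZMod 2

/-- The coset `H + g` (note that `-g = g` in `𝔽₂ⁿ`). -/
def coset {n : ℕ} (H : AddSubgroup (G n)) (g : G n) : Set (G n) := {x | x + g ∈ H}

/-- The entropy function `f(x) = x log x` (with `f 0 = 0`). -/
def ent (x : ℝ) : ℝ := x * Real.log x

/-- The density of `A` on the coset `H + g`. -/
def dens {n : ℕ} (A : Set (G n)) (H : AddSubgroup (G n)) (g : G n) : ℝ :=
  (Nat.card ↥(A ∩ coset H g) : ℝ) / (Nat.card ↥H : ℝ)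

/-- Mean entropy `F_A(G, H)` of partitioning `G` into cosets of `H`. -/
def meanEntG {n : ℕ} (A : Set (G n)) (H : AddSubgroup (G n)) : ℝ :=
  (∑ g : G n, ent (dens A H g)) / (Fintype.card (G n) : ℝ)

/-- Mean entropy `F_A(H + g, H')` of partitioning the coset `H + g` into cosets of `H'`. -/
def meanEntCoset {n : ℕ} (A : Set (G n)) (H H' : AddSubgroup (G n)) (g : G n) : ℝ :=
  (∑ g₁ : ↥H, ent (dens A H' (g + ↑g₁))) / (Nat.card ↥H : ℝ)

/-- The standard bilinear form on `𝔽₂ⁿ`. -/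
def dotp {n : ℕ} (x y : G n) : ZMod 2 := ∑ i, x i * y i

/-- The character value `(-1)^{⟨x, y⟩}`. -/
def chi {n : ℕ} (x y : G n) : ℝ := if dotp x y = 0 then 1 else -1

/-- Fourier coefficient `f̂_H^g(η) = E_{x ∈ H} [f(x + g) · (-1)^{⟨x, η⟩}]`. -/
def fCoeff {n : ℕ} (H : AddSubgroup (G n)) (g : G n) (f : G n → ℝ) (η : G n) : ℝ :=
  (∑ x : ↥H, f (↑x + g) * chi ↑x η) / (Nat.card ↥H : ℝ)

/-- `f` is `ρ`-superregular on `H + g`: every Fourier coefficient at a character that is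
nontrivial on `H` is at most `ρ` times the zeroth coefficient in absolute value. -/
def SuperregularOn {n : ℕ} (H : AddSubgroup (G n)) (g : G n) (ρ : ℝ) (f : G n → ℝ) : Prop :=
  ∀ η : G n, (∃ x ∈ H, dotp x η ≠ 0) →
    |fCoeff H g f η| ≤ ρ * fCoeff H g f 0

/-- `H'` `(α, β, k)`-shatters `A` on `H + g`. -/
def Shatters {n : ℕ} (H' H : AddSubgroup (G n)) (A : Set (G n)) (g : G n)
    (α β k : ℝ) : Prop :=
  (Nat.card ↥H : ℝ) / (Nat.card ↥H' : ℝ) ≤ (2 : ℝ) ^ k ∧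
  α ≤ (Nat.card {g' : ↥H //
        (Nat.card ↥(A ∩ coset H' (g + ↑g')) : ℝ) ≤ β * dens A H g * (Nat.card ↥H' : ℝ)} : ℝ) /
      (Nat.card ↥H : ℝ)

/-- Number of triangles `(a, b, c)`, `a + b + c = 0`, with `a ∈ S₁`, `b ∈ S₂`, `c ∈ S₃`. -/
def triBetween {n : ℕ} (S₁ S₂ S₃ : Set (G n)) : ℕ :=
  Nat.card {p : G n × G n × G n // p.1 ∈ S₁ ∧ p.2.1 ∈ S₂ ∧ p.2.2 ∈ S₃ ∧ p.1 + p.2.1 + p.2.2 = 0}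

/-- Number of triangles in `A`. -/
def triCount {n : ℕ} (A : Set (G n)) : ℕ := triBetween A A A

/-- The annihilator of `K`: characters trivial on `K`. -/
def ann {n : ℕ} (K : AddSubgroup (G n)) : AddSubgroup (G n) where
  carrier := {η | ∀ x ∈ K, dotp x η = 0}
  zero_mem' := by intro x _; simp [dotp]
  add_mem' := by
    intro a b ha hb x hx
    have h : dotp x (a + b) = dotp x a + dotp x b := by
      simp [dotp, mul_add, Finset.sum_add_distrib]
    rw [h, ha x hx, hb x hx, add_zero]
  neg_mem' := by
    intro a ha x hx
    have h : dotp x (-a) = -dotp x a := by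
      simp [dotp]
    rw [h, ha x hx, neg_zero]

/-- Average of `f` over the coset `v + H'`. -/
def fbar {n : ℕ} (H' : AddSubgroup (G n)) (f : G n → ℝ) (v : G n) : ℝ :=
  (∑ y : ↥H', f (v + ↑y)) / (Nat.card ↥H' : ℝ)

/-- Tower function: `tower 0 = 1`, `tower (i+1) = 2 ^ tower i`. -/
def tower : ℕ → ℕ
  | 0 => 1
  | k + 1 => 2 ^ tower k

/-- `A` is `ε`-far from triangle-free: at least `ε N` elements must be removed from `A`
to destroy all triangles. -/
def FarFromTriangleFree {n : ℕ} (A : Set (G n)) (ε : ℝ) : Prop :=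
  ∀ B ⊆ A, (∀ x ∈ B, ∀ y ∈ B, ∀ z ∈ B, x + y + z ≠ 0) →
    ε * 2 ^ n ≤ (Nat.card ↥(A \ B) : ℝ)

/-- The set of elements of a triangle. -/
def elems {n : ℕ} (p : G n × G n × G n) : Set (G n) := {p.1, p.2.1, p.2.2}

lemma zmod2_cases (a : ZMod 2) : a = 0 ∨ a = 1 := by
  revert a; decide

lemma g_add_self {n : ℕ} (x : G n) : x + x = 0 := by
  ext i
  simp only [Pi.add_apply, Pi.zero_apply]
  generalize x i = a
  revert a; decide

lemma g_add_eq_zero {n : ℕ} {x y : G n} : x + y = 0 ↔ x = y := by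
  constructor
  · intro h
    have : x + y + y = y := by rw [h, zero_add]
    rwa [add_assoc, g_add_self, add_zero] at this
  · rintro rfl; exact g_add_self x

lemma dotp_add_left {n : ℕ} (x y η : G n) : dotp (x + y) η = dotp x η + dotp y η := by
  simp [dotp, add_mul, Finset.sum_add_distrib]

lemma dotp_comm {n : ℕ} (x y : G n) : dotp x y = dotp y x := by
  simp [dotp, mul_comm]

lemma chi_comm {n : ℕ} (x y : G n) : chi x y = chi y x := by
  simp [chi, dotp_comm]

lemma chi_add {n : ℕ} (x y η : G n) : chi (x + y) η = chi x η * chi y η := by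
  unfold chi
  rw [dotp_add_left]
  have h11 : (1 : ZMod 2) + 1 = 0 := by decide
  rcases zmod2_cases (dotp x η) with h | h <;> rcases zmod2_cases (dotp y η) with h' | h' <;>
    simp [h, h', h11]

lemma chi_zero {n : ℕ} (η : G n) : chi 0 η = 1 := by simp [chi, dotp]

lemma chi_abs {n : ℕ} (x η : G n) : |chi x η| = 1 := by
  unfold chi; split_ifs <;> simp

lemma chi_neg_of {n : ℕ} {x η : G n} (h : dotp x η ≠ 0) : chi x η = -1 := by
  simp [chi, h]

lemma sum_chi_right {n : ℕ} (x : G n) :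
    ∑ η : G n, chi x η = if x = 0 then (Fintype.card (G n) : ℝ) else 0 := by
  split_ifs with hx
  · subst hx; simp [chi_zero]
  · obtain ⟨i, hi⟩ : ∃ i, x i ≠ 0 := by
      by_contra! h; exact hx (funext h)
    have hd : dotp x (Pi.single i 1) ≠ 0 := by
      unfold dotp
      rw [Finset.sum_eq_single i]
      · simpa using hi
      · intro b _ hb; simp [hb]
      · simp
    have h1 : ∑ η : G n, chi x (η + Pi.single i 1) = ∑ η : G n, chi x η :=
      Fintype.sum_equiv (Equiv.addRight (Pi.single i 1)) _ _ (fun _ => rfl)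
    have h2 : ∀ η : G n, chi x (η + Pi.single i 1) = - chi x η := by
      intro η
      rw [chi_comm, chi_add, chi_comm η, chi_comm _ x, chi_neg_of hd]; ring
    simp only [h2, Finset.sum_neg_distrib] at h1
    linarith

/-- Coset as a finset. -/
def cosF {n : ℕ} (H : AddSubgroup (G n)) (g : G n) : Finset (G n) :=
  Finset.univ.filter (fun x => x + g ∈ H)

def subF {n : ℕ} (H : AddSubgroup (G n)) : Finset (G n) :=
  Finset.univ.filter (fun x => x ∈ H)

lemma mem_cosF {n : ℕ} {H : AddSubgroup (G n)} {g x : G n} : x ∈ cosF H g ↔ x + g ∈ H := by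
  simp [cosF]

lemma mem_subF {n : ℕ} {H : AddSubgroup (G n)} {x : G n} : x ∈ subF H ↔ x ∈ H := by
  simp [subF]

lemma card_subF {n : ℕ} (H : AddSubgroup (G n)) : (subF H).card = Nat.card H := by
  rw [Nat.card_eq_fintype_card]
  exact (Fintype.card_of_subtype (subF H) (fun x => mem_subF)).symm

lemma subF_pos {n : ℕ} (H : AddSubgroup (G n)) : (0 : ℝ) < (subF H).card := by
  exact_mod_cast Finset.card_pos.2 ⟨0, mem_subF.2 H.zero_mem⟩

lemma sum_chi_sub {n : ℕ} (H : AddSubgroup (G n)) (η : G n) :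
    ∑ x ∈ subF H, chi x η = if η ∈ ann H then ((subF H).card : ℝ) else 0 := by
  split_ifs with h
  · rw [Finset.sum_congr rfl (g := fun _ => (1 : ℝ))]
    · simp
    · intro x hx
      have := h x (mem_subF.1 hx)
      simp [chi, this]
  · have : ∃ x ∈ H, dotp x η ≠ 0 := by
      by_contra! h'; exact h h'
    obtain ⟨x₀, hx₀, hd⟩ := this
    have h1 : ∑ x ∈ subF H, chi (x + x₀) η = ∑ x ∈ subF H, chi x η := by
      refine Finset.sum_bij (fun x _ => x + x₀) ?_ ?_ ?_ ?_
      · intro a ha; exact mem_subF.2 (H.add_mem (mem_subF.1 ha) hx₀)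
      · intro a _ b _ hab; exact add_right_cancel hab
      · intro b hb
        exact ⟨b + x₀, mem_subF.2 (H.add_mem (mem_subF.1 hb) hx₀), by
          rw [add_assoc, g_add_self, add_zero]⟩
      · intros; rfl
    simp only [chi_add, chi_neg_of hd, mul_neg, mul_one, Finset.sum_neg_distrib] at h1
    linarith

lemma card_ann {n : ℕ} (H : AddSubgroup (G n)) :
    ((subF (ann H)).card : ℝ) * (subF H).card = Fintype.card (G n) := by
  have h1 : ∑ η : G n, ∑ x ∈ subF H, chi x η = Fintype.card (G n) := by
    rw [Finset.sum_comm]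
    simp only [sum_chi_right]
    rw [Finset.sum_ite_eq' ]
    simp [mem_subF, H.zero_mem]
  simp only [sum_chi_sub] at h1
  rw [← Finset.sum_filter] at h1
  simpa [subF] using h1

def ft {n : ℕ} (P : Finset (G n)) (η : G n) : ℝ := ∑ x ∈ P, chi x η

def tri {n : ℕ} (P Q R : Finset (G n)) : ℝ :=
  ∑ x ∈ P, ∑ y ∈ Q, if x + y ∈ R then (1 : ℝ) else 0

lemma tri_fourier {n : ℕ} (P Q R : Finset (G n)) :
    ∑ η, ft P η * ft Q η * ft R η = Fintype.card (G n) * tri P Q R := by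
  have h : ∀ η, ft P η * ft Q η * ft R η =
      ∑ x ∈ P, ∑ y ∈ Q, ∑ z ∈ R, chi (x + y + z) η := by
    intro η
    unfold ft
    rw [Finset.sum_mul_sum, Finset.sum_mul]
    refine Finset.sum_congr rfl fun x _ => ?_
    rw [Finset.sum_mul]
    refine Finset.sum_congr rfl fun y _ => ?_
    rw [Finset.mul_sum]
    refine Finset.sum_congr rfl fun z _ => ?_
    rw [chi_add, chi_add]
  simp only [h]
  rw [Finset.sum_comm, tri, Finset.mul_sum]
  refine Finset.sum_congr rfl fun x _ => ?_
  rw [Finset.sum_comm, Finset.mul_sum]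
  refine Finset.sum_congr rfl fun y _ => ?_
  rw [Finset.sum_comm]
  simp only [sum_chi_right, g_add_eq_zero]
  rw [Finset.sum_ite_eq]
  simp

lemma parseval {n : ℕ} (P : Finset (G n)) :
    ∑ η, ft P η ^ 2 = Fintype.card (G n) * P.card := by
  have h : ∀ η, ft P η ^ 2 = ∑ x ∈ P, ∑ y ∈ P, chi (x + y) η := by
    intro η
    unfold ft
    rw [sq, Finset.sum_mul_sum]
    simp only [chi_add]
  simp only [h]
  rw [Finset.sum_comm]
  have : ∀ x ∈ P, ∑ η, ∑ y ∈ P, chi (x + y) η = (Fintype.card (G n) : ℝ) := by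
    intro x hx
    rw [Finset.sum_comm]
    simp only [sum_chi_right, g_add_eq_zero]
    rw [Finset.sum_ite_eq]
    simp [hx]
  rw [Finset.sum_congr rfl this]
  simp [mul_comm]

lemma ft_ann {n : ℕ} {H : AddSubgroup (G n)} {p η : G n} {P : Finset (G n)}
    (hP : P ⊆ cosF H p) (hη : η ∈ ann H) : ft P η = P.card * chi p η := by
  unfold ft
  rw [Finset.sum_congr rfl (g := fun _ => chi p η)]
  · simp
  · intro x hx
    have h1 : dotp (x + p) η = 0 := hη _ (mem_cosF.1 (hP hx))
    have : chi (x + p + p) η = chi p η := by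
      rw [chi_add]; simp [chi, h1]
    rwa [add_assoc, g_add_self, add_zero] at this

lemma counting {n : ℕ} (H : AddSubgroup (G n)) (p q : G n) (P Q R : Finset (G n)) (ρ : ℝ)
    (hρ : 0 ≤ ρ)
    (hP : P ⊆ cosF H p) (hQ : Q ⊆ cosF H q) (hR : R ⊆ cosF H (p + q))
    (hreg : ∀ η, η ∉ ann H → |ft P η| ≤ ρ * P.card) :
    (P.card : ℝ) * (Q.card * R.card - ρ * (subF H).card * √(Q.card * R.card))
      ≤ (subF H).card * tri P Q R := by
  have hN : (0 : ℝ) < Fintype.card (G n) := by exact_mod_cast Fintype.card_pos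
  set N : ℝ := (Fintype.card (G n) : ℝ)
  have hann := card_ann H
  have hH := subF_pos H
  have hF := tri_fourier P Q R
  rw [← Finset.sum_filter_add_sum_filter_not Finset.univ (fun η => η ∈ ann H)] at hF
  have hmain : ∑ η ∈ Finset.univ.filter (fun η => η ∈ ann H), ft P η * ft Q η * ft R η
      = (subF (ann H)).card * (P.card * Q.card * R.card) := by
    rw [Finset.sum_congr rfl (g := fun _ => (P.card * Q.card * R.card : ℝ))]
    · simp [subF]
    · intro η hη
      have hη : η ∈ ann H := by simpa using hη
      rw [ft_ann hP hη, ft_ann hQ hη, ft_ann hR hη, chi_add]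
      have h1 : chi p η ^ 2 = 1 := by rw [← sq_abs, chi_abs]; norm_num
      have h2 : chi q η ^ 2 = 1 := by rw [← sq_abs, chi_abs]; norm_num
      linear_combination (P.card * Q.card * R.card : ℝ) * (chi q η ^ 2 * h1 + h2)
  have hCS : ∑ η, |ft Q η| * |ft R η| ≤ N * √(Q.card * R.card) := by
    have := Real.sum_mul_le_sqrt_mul_sqrt Finset.univ (fun η => |ft Q η|) (fun η => |ft R η|)
    simp only [sq_abs, parseval] at this
    rw [← Real.sqrt_mul (by positivity)] at this
    refine this.trans (le_of_eq ?_)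
    rw [show (Fintype.card (G n) : ℝ) * Q.card * (Fintype.card (G n) * R.card)
      = N ^ 2 * (Q.card * R.card) by ring, Real.sqrt_mul (by positivity), Real.sqrt_sq hN.le]
  have herr : -(ρ * P.card * (N * √(Q.card * R.card))) ≤
      ∑ η ∈ Finset.univ.filter (fun η => η ∉ ann H), ft P η * ft Q η * ft R η := by
    have h1 : |∑ η ∈ Finset.univ.filter (fun η => η ∉ ann H), ft P η * ft Q η * ft R η| ≤
        ρ * P.card * ∑ η, |ft Q η| * |ft R η| := by
      refine (Finset.abs_sum_le_sum_abs _ _).trans ?_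
      rw [Finset.mul_sum]
      refine (Finset.sum_le_sum (g := fun η => ρ * P.card * (|ft Q η| * |ft R η|)) ?_).trans
        (Finset.sum_le_sum_of_subset_of_nonneg (Finset.filter_subset _ _) ?_)
      · intro η hη
        have hη : η ∉ ann H := by simpa using hη
        rw [abs_mul, abs_mul, mul_assoc]
        exact mul_le_mul_of_nonneg_right (hreg η hη) (by positivity)
      · intros; positivity
    have h2 := mul_le_mul_of_nonneg_left hCS (show 0 ≤ ρ * P.card by positivity)
    have := neg_abs_le (∑ η ∈ Finset.univ.filter (fun η => η ∉ ann H), ft P η * ft Q η * ft R η)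
    linarith
  rw [hmain] at hF
  set S := ∑ η ∈ Finset.univ.filter (fun η => η ∉ ann H), ft P η * ft Q η * ft R η
  have h3 : ((subF (ann H)).card : ℝ) * (P.card * Q.card * R.card)
     - ρ * P.card * (N * √(Q.card * R.card)) ≤ N * tri P Q R := by linarith
  have h4 := mul_le_mul_of_nonneg_left h3 hH.le
  refine le_of_mul_le_mul_left ?_ hN
  calc _ = ((subF H).card : ℝ) * (((subF (ann H)).card : ℝ) * (P.card * Q.card * R.card)
     - ρ * P.card * (N * √(Q.card * R.card))) := by
        linear_combination (-(P.card * Q.card * R.card : ℝ)) * hann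
    _ ≤ _ := h4
    _ = _ := by ring

/-- Kernel of a character inside `H`. -/
def kerIn {n : ℕ} (H : AddSubgroup (G n)) (η : G n) : AddSubgroup (G n) where
  carrier := {x | x ∈ H ∧ dotp x η = 0}
  zero_mem' := ⟨H.zero_mem, by simp [dotp]⟩
  add_mem' := by
    rintro a b ⟨ha, ha'⟩ ⟨hb, hb'⟩
    exact ⟨H.add_mem ha hb, by rw [dotp_add_left, ha', hb', add_zero]⟩
  neg_mem' := by
    rintro a ⟨ha, ha'⟩
    refine ⟨H.neg_mem ha, ?_⟩
    have : -a = a := neg_eq_of_add_eq_zero_left (g_add_self a)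
    rw [this, ha']

lemma ft_split {n : ℕ} (P : Finset (G n)) (η : G n) :
    ft P η = ((P.filter (fun x => dotp x η = 0)).card : ℝ)
      - (P.filter (fun x => ¬ dotp x η = 0)).card := by
  unfold ft
  rw [← Finset.sum_filter_add_sum_filter_not P (fun x => dotp x η = 0)]
  rw [Finset.sum_congr rfl (g := fun _ => (1 : ℝ)),
    Finset.sum_congr (s₁ := P.filter (fun x => ¬ dotp x η = 0)) rfl (g := fun _ => (-1 : ℝ))]
  · simp; ring
  · intro x hx; exact chi_neg_of (Finset.mem_filter.1 hx).2
  · intro x hx; simp [chi, (Finset.mem_filter.1 hx).2]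

lemma card_split {n : ℕ} (P : Finset (G n)) (η : G n) :
    (P.card : ℝ) = ((P.filter (fun x => dotp x η = 0)).card : ℝ)
      + (P.filter (fun x => ¬ dotp x η = 0)).card := by
  exact_mod_cast (Finset.card_filter_add_card_filter_not (s := P) (fun x => dotp x η = 0)).symm

lemma card_kerIn {n : ℕ} (H : AddSubgroup (G n)) (η : G n) (hη : η ∉ ann H) :
    ((subF H).card : ℝ) = 2 * (subF (kerIn H η)).card := by
  have h1 : ft (subF H) η = 0 := by
    unfold ft; rw [sum_chi_sub, if_neg hη]
  have h2 := card_split (subF H) η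
  rw [ft_split] at h1
  have h3 : (subF H).filter (fun x => dotp x η = 0) = subF (kerIn H η) := by
    ext x
    rw [Finset.mem_filter, mem_subF, mem_subF]
    exact Iff.rfl
  rw [h3] at h1 h2
  linarith

lemma exists_half {n : ℕ} (P : Finset (G n)) (η : G n) (ρ : ℝ) (hρ : 0 < ρ)
    (hP : (0 : ℝ) < P.card) (h : ρ * P.card < |ft P η|) :
    ∃ x ∈ P, (1 + ρ) / 2 * P.card ≤ (P.filter (fun y => dotp y η = dotp x η)).card := by
  have h1 := ft_split P η
  have h2 := card_split P η
  have hpos : 0 < (1 + ρ) / 2 * P.card := by positivity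
  rcases lt_abs.1 h with h3 | h3
  · have h4 : (1 + ρ) / 2 * P.card ≤ (P.filter (fun x => dotp x η = 0)).card := by
      linarith
    obtain ⟨x, hx⟩ : (P.filter (fun x => dotp x η = 0)).Nonempty := by
      rw [← Finset.card_pos]
      exact_mod_cast hpos.trans_le h4
    rw [Finset.mem_filter] at hx
    exact ⟨x, hx.1, by rwa [hx.2]⟩
  · have h4 : (1 + ρ) / 2 * P.card ≤ (P.filter (fun x => ¬ dotp x η = 0)).card := by
      linarith
    obtain ⟨x, hx⟩ : (P.filter (fun x => ¬ dotp x η = 0)).Nonempty := by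
      rw [← Finset.card_pos]
      exact_mod_cast hpos.trans_le h4
    rw [Finset.mem_filter] at hx
    refine ⟨x, hx.1, ?_⟩
    have hx1 : dotp x η = 1 := (zmod2_cases _).resolve_left hx.2
    have : P.filter (fun x => ¬ dotp x η = 0) = P.filter (fun y => dotp y η = dotp x η) := by
      refine Finset.filter_congr fun y _ => ?_
      rw [hx1]
      rcases zmod2_cases (dotp y η) with h | h <;> simp [h]
    rwa [← this]

lemma increment {n : ℕ} (B : Finset (G n)) (ρ : ℝ) (hρ : 0 < ρ) :
    ∀ (N : ℕ) (H : AddSubgroup (G n)) (g : G n) (δ : ℝ), (subF H).card ≤ N → 0 < δ →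
      δ * (subF H).card ≤ (B ∩ cosF H g).card →
      ∃ (H' : AddSubgroup (G n)) (p : G n) (m : ℕ), H' ≤ H ∧ p + g ∈ H ∧
        ((subF H).card : ℝ) = 2 ^ m * (subF H').card ∧
        (1 + ρ) ^ m * δ * (subF H').card ≤ (B ∩ cosF H' p).card ∧
        ∀ η, η ∉ ann H' → |ft (B ∩ cosF H' p) η| ≤ ρ * (B ∩ cosF H' p).card := by
  intro N
  induction N with
  | zero =>
    intro H g δ h0
    have := subF_pos H
    exact absurd h0 (by have : 0 < (subF H).card := by exact_mod_cast this
                        omega)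
  | succ N ih =>
    intro H g δ hN hδ hden
    by_cases hreg : ∀ η, η ∉ ann H → |ft (B ∩ cosF H g) η| ≤ ρ * (B ∩ cosF H g).card
    · exact ⟨H, g, 0, le_rfl, by rw [g_add_self]; exact H.zero_mem, by simp, by simpa using hden,
        hreg⟩
    · push Not at hreg
      obtain ⟨η, hη, hbig⟩ := hreg
      have hH := subF_pos H
      have hpos : (0 : ℝ) < (B ∩ cosF H g).card := lt_of_lt_of_le (by positivity) hden
      obtain ⟨x, hx, hx'⟩ := exists_half _ η ρ hρ hpos hbig
      have hk := card_kerIn H η hη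
      have hxg : x + g ∈ H := mem_cosF.1 (Finset.mem_inter.1 hx).2
      have heq : (B ∩ cosF H g).filter (fun y => dotp y η = dotp x η)
          = B ∩ cosF (kerIn H η) x := by
        ext y
        have e1 : y + g ∈ H ↔ y + x ∈ H := by
          have : y + g = (y + x) + (x + g) := by
            rw [show (y + x) + (x + g) = y + g + (x + x) by abel, g_add_self, add_zero]
          rw [this]
          exact H.add_mem_cancel_right hxg
        have e2 : dotp y η = dotp x η ↔ dotp (y + x) η = 0 := by
          rw [dotp_add_left]
          generalize dotp y η = a
          generalize dotp x η = b
          revert a b; decide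
        have e3 : y + x ∈ kerIn H η ↔ y + x ∈ H ∧ dotp (y + x) η = 0 := Iff.rfl
        simp only [Finset.mem_filter, Finset.mem_inter, mem_cosF, e1, e2, e3, and_assoc]
      rw [heq] at hx'
      have hk' : (subF H).card = 2 * (subF (kerIn H η)).card := by exact_mod_cast hk
      have hkp := subF_pos (kerIn H η)
      have hkp' : 0 < (subF (kerIn H η)).card := by exact_mod_cast hkp
      obtain ⟨H', p, m, h1, h2, h3, h4, h5⟩ := ih (kerIn H η) x ((1 + ρ) * δ) (by omega)
        (by positivity) (by
          refine le_trans ?_ hx'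
          have := mul_le_mul_of_nonneg_left hden (show 0 ≤ (1 + ρ) / 2 by positivity)
          rw [hk] at this
          linarith)
      refine ⟨H', p, m + 1, h1.trans (fun y hy => hy.1), ?_, ?_, ?_, h5⟩
      · have : p + g = (p + x) + (x + g) := by
          rw [show (p + x) + (x + g) = p + g + (x + x) by abel, g_add_self, add_zero]
        rw [this]
        exact H.add_mem h2.1 hxg
      · rw [hk, h3]; ring
      · rw [pow_succ]; linarith

def rep {n : ℕ} (AF Q : Finset (G n)) (x : G n) : ℝ :=
  ∑ y ∈ Q, if x + y ∈ AF then (1 : ℝ) else 0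

lemma sum_tri_le {n : ℕ} (H H' : AddSubgroup (G n)) (hH : H' ≤ H) (AF P : Finset (G n))
    (g p : G n) :
    ∑ u ∈ subF H, tri P (AF ∩ cosF H' (g + u)) (AF ∩ cosF H' (p + (g + u)))
      ≤ (subF H').card * ∑ x ∈ P, rep AF (AF ∩ cosF H g) x := by
  unfold tri
  rw [Finset.sum_comm, Finset.mul_sum]
  refine Finset.sum_le_sum fun x _ => ?_
  have h1 : ∀ u ∈ subF H, (∑ y ∈ AF ∩ cosF H' (g + u),
        if x + y ∈ AF ∩ cosF H' (p + (g + u)) then (1 : ℝ) else 0) ≤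
      ∑ y ∈ AF ∩ cosF H g, if y ∈ cosF H' (g + u) then (if x + y ∈ AF then (1 : ℝ) else 0) else 0 := by
    intro u hu
    rw [← Finset.sum_filter (fun y => y ∈ cosF H' (g + u))]
    have hsub : AF ∩ cosF H' (g + u) ⊆ (AF ∩ cosF H g).filter (fun y => y ∈ cosF H' (g + u)) := by
      intro y hy
      rw [Finset.mem_inter] at hy
      rw [Finset.mem_filter, Finset.mem_inter]
      refine ⟨⟨hy.1, ?_⟩, hy.2⟩
      have h2 := hH (mem_cosF.1 hy.2)
      rw [← add_assoc, H.add_mem_cancel_right (mem_subF.1 hu)] at h2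
      exact mem_cosF.2 h2
    refine le_trans (Finset.sum_le_sum ?_) (Finset.sum_le_sum_of_subset_of_nonneg hsub ?_)
    · intro y _
      split_ifs with h1 h2 <;> first | exact absurd (Finset.mem_inter.1 h1).1 h2 | norm_num
    · intros; split_ifs <;> norm_num
  refine (Finset.sum_le_sum h1).trans ?_
  rw [Finset.sum_comm, rep, Finset.mul_sum]
  refine Finset.sum_le_sum fun y _ => ?_
  rw [← Finset.sum_filter, Finset.sum_const, nsmul_eq_mul]
  refine mul_le_mul_of_nonneg_right ?_ (by split_ifs <;> norm_num)
  norm_cast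
  refine Finset.card_le_card_of_injOn (fun u => y + (g + u)) ?_ ?_
  · intro u hu
    have := (Finset.mem_filter.1 hu).2
    exact mem_subF.2 (mem_cosF.1 this)
  · intro a _ b _ hab
    exact add_left_cancel (add_left_cancel hab)

lemma arith (q r h D : ℝ) (hq : 0 ≤ q) (hr : 0 ≤ r) (hh : 0 < h) (hD0 : 0 < D) (hD1 : D ≤ 1)
    (hqr : 9 / 16 * D * h ^ 2 ≤ q * r) :
    3 / 8 * D * h ^ 2 ≤ q * r - D / 4 * h * √(q * r) := by
  have hs : √(q * r) ^ 2 = q * r := Real.sq_sqrt (by positivity)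
  have hs0 := Real.sqrt_nonneg (q * r)
  set s := √(q * r)
  have ht : √D ^ 2 = D := Real.sq_sqrt hD0.le
  have ht0 := Real.sqrt_nonneg D
  have ht1 : √D ≤ 1 := Real.sqrt_le_one.2 hD1
  set t := √D
  have h1 : 3 / 4 * t * h ≤ s := by
    refine abs_le_of_sq_le_sq' ?_ hs0 |>.2
    rw [hs]; nlinarith
  have hth : 0 ≤ t * h := by positivity
  have h2 : D / 4 * h * s ≤ t * h / 4 * s := by
    refine mul_le_mul_of_nonneg_right ?_ hs0
    have : D ≤ t := by nlinarith
    nlinarith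
  have h3 : 3 / 4 * (t * h) * (1 / 2 * (t * h)) ≤ s * (s - t * h / 4) :=
    mul_le_mul (by linarith) (by linarith) (by positivity) hs0
  have h4 : 3 / 4 * (t * h) * (1 / 2 * (t * h)) = 3 / 8 * D * h ^ 2 := by rw [← ht]; ring
  nlinarith

lemma tri_nonneg {n : ℕ} (P Q R : Finset (G n)) : 0 ≤ tri P Q R := by
  unfold tri
  refine Finset.sum_nonneg fun x _ => Finset.sum_nonneg fun y _ => ?_
  split_ifs <;> norm_num

def bad {n : ℕ} (AF : Finset (G n)) (H H' : AddSubgroup (G n)) (g : G n) (d : ℝ) :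
    Finset (G n) :=
  (subF H).filter (fun u => ((AF ∩ cosF H' (g + u)).card : ℝ) ≤ 3 / 4 * d * (subF H').card)

lemma piece {n : ℕ} (H H' : AddSubgroup (G n)) (hH : H' ≤ H) (AF P : Finset (G n))
    (g₁ g₂ g₃ p : G n) (hg : g₁ + g₂ + g₃ = 0) (hp : p + g₁ ∈ H) (hP : P ⊆ cosF H' p)
    (d₂ d₃ : ℝ) (h2 : 0 < d₂) (h2' : d₂ ≤ 1) (h3 : 0 < d₃) (h3' : d₃ ≤ 1)
    (hreg : ∀ η, η ∉ ann H' → |ft P η| ≤ d₂ * d₃ / 4 * P.card)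
    (hb2 : ((bad AF H H' g₂ d₂).card : ℝ) ≤ 1 / 20 * (subF H).card)
    (hb3 : ((bad AF H H' g₃ d₃).card : ℝ) ≤ 1 / 20 * (subF H).card) :
    27 / 80 * (d₂ * d₃) * (subF H).card * P.card ≤ ∑ x ∈ P, rep AF (AF ∩ cosF H g₂) x := by
  have hh := subF_pos H'
  set h : ℝ := ((subF H').card : ℝ) with hdef
  have hD : 0 < d₂ * d₃ := by positivity
  have hD1 : d₂ * d₃ ≤ 1 := by nlinarith
  have hA := sum_tri_le H H' hH AF P g₂ p
  -- the translated bad set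
  set bad3' := (subF H).filter (fun u => ((AF ∩ cosF H' (p + (g₂ + u))).card : ℝ)
    ≤ 3 / 4 * d₃ * (subF H').card) with hbad3'
  have hb3' : (bad3'.card : ℝ) ≤ 1 / 20 * (subF H).card := by
    refine le_trans ?_ hb3
    norm_cast
    refine Finset.card_le_card_of_injOn (fun u => p + g₁ + u) ?_ ?_
    · intro u hu
      have hu := Finset.mem_filter.1 hu
      have e : g₃ + (p + g₁ + u) = p + (g₂ + u) := by
        have : g₁ + g₃ = g₂ := by
          rw [← g_add_eq_zero, ← hg]; abel
        rw [← this]; abel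
      refine Finset.mem_filter.2 ⟨mem_subF.2 (H.add_mem hp (mem_subF.1 hu.1)), ?_⟩
      rw [e]; exact hu.2
    · intro a _ b _ hab
      exact add_left_cancel hab
  set good := subF H \ (bad AF H H' g₂ d₂ ∪ bad3')
  have hgood : 9 / 10 * ((subF H).card : ℝ) ≤ good.card := by
    have c1 : (subF H).card ≤ good.card + ((bad AF H H' g₂ d₂).card + bad3'.card) := by
      have c2 := Finset.le_card_sdiff (bad AF H H' g₂ d₂ ∪ bad3') (subF H)
      have c3 := Finset.card_union_le (bad AF H H' g₂ d₂) bad3'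
      change _ ≤ good.card at c2
      omega
    have c1' : ((subF H).card : ℝ) ≤ good.card + ((bad AF H H' g₂ d₂).card + bad3'.card) := by
      exact_mod_cast c1
    linarith
  have hB : ∑ u ∈ good, (3 / 8 * (d₂ * d₃) * h * P.card) ≤
      ∑ u ∈ subF H, tri P (AF ∩ cosF H' (g₂ + u)) (AF ∩ cosF H' (p + (g₂ + u))) := by
    refine (Finset.sum_le_sum ?_).trans (Finset.sum_le_sum_of_subset_of_nonneg
      Finset.sdiff_subset (fun _ _ _ => tri_nonneg _ _ _))
    intro u hu
    have hu := Finset.mem_sdiff.1 hu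
    have hu2 := hu.2
    simp only [Finset.mem_union, not_or] at hu2
    obtain ⟨n2, n3⟩ := hu2
    have q2 : 3 / 4 * d₂ * h ≤ (AF ∩ cosF H' (g₂ + u)).card := by
      by_contra! hc; exact n2 (Finset.mem_filter.2 ⟨hu.1, hc.le⟩)
    have q3 : 3 / 4 * d₃ * h ≤ (AF ∩ cosF H' (p + (g₂ + u))).card := by
      by_contra! hc; exact n3 (Finset.mem_filter.2 ⟨hu.1, hc.le⟩)
    have hc := counting H' p (g₂ + u) P (AF ∩ cosF H' (g₂ + u)) (AF ∩ cosF H' (p + (g₂ + u)))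
      (d₂ * d₃ / 4) (by positivity) hP Finset.inter_subset_right Finset.inter_subset_right hreg
    have ha := arith (AF ∩ cosF H' (g₂ + u)).card (AF ∩ cosF H' (p + (g₂ + u))).card h
      (d₂ * d₃) (by positivity) (by positivity) hh hD hD1 (by
        have := mul_le_mul q2 q3 (by positivity) (by positivity)
        refine le_trans (le_of_eq ?_) this
        ring)
    have hc2 := (mul_le_mul_of_nonneg_left ha (show (0 : ℝ) ≤ P.card by positivity)).trans hc
    refine le_of_mul_le_mul_left ?_ hh
    refine le_trans (le_of_eq ?_) hc2
    ring
  rw [Finset.sum_const, nsmul_eq_mul] at hB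
  have hC := hB.trans hA
  have hE : 9 / 10 * ((subF H).card : ℝ) * (3 / 8 * (d₂ * d₃) * h * P.card) ≤
      good.card * (3 / 8 * (d₂ * d₃) * h * P.card) :=
    mul_le_mul_of_nonneg_right hgood (by positivity)
  refine le_of_mul_le_mul_left ?_ hh
  refine le_trans (le_of_eq ?_) (hE.trans hC)
  ring

lemma card_inter_coset {n : ℕ} (A : Set (G n)) (H : AddSubgroup (G n)) (g : G n) :
    Nat.card ↥(A ∩ coset H g) = (A.toFinset ∩ cosF H g).card := by
  rw [Nat.card_eq_fintype_card]
  refine Fintype.card_of_subtype _ (fun x => ?_)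
  rw [Finset.mem_inter, mem_cosF, Set.mem_toFinset]
  exact Iff.rfl

lemma card_sub_filter {n : ℕ} (H : AddSubgroup (G n)) (q : G n → Prop) :
    Nat.card {g' : ↥H // q ↑g'} = ((subF H).filter q).card := by
  rw [Nat.card_congr (Equiv.subtypeSubtypeEquivSubtypeInter (fun x => x ∈ H) q),
    Nat.card_eq_fintype_card]
  refine Fintype.card_of_subtype _ (fun x => ?_)
  rw [Finset.mem_filter, mem_subF]

lemma bad_of_not_shatters {n : ℕ} (H H' : AddSubgroup (G n)) (A : Set (G n)) (g : G n) (k : ℝ)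
    (m : ℕ) (hm : ((subF H).card : ℝ) = 2 ^ m * (subF H').card) (hmk : (m : ℝ) ≤ k)
    (hns : ¬ Shatters H' H A g (1 / 20) (3 / 4) k) :
    ((bad A.toFinset H H' g (dens A H g)).card : ℝ) ≤ 1 / 20 * (subF H).card := by
  by_contra! hc
  apply hns
  have hH := subF_pos H
  have hH' := subF_pos H'
  refine ⟨?_, ?_⟩
  · rw [← card_subF, ← card_subF, hm, mul_div_cancel_right₀ _ hH'.ne', ← Real.rpow_natCast]
    exact Real.rpow_le_rpow_of_exponent_le (by norm_num) hmk
  · rw [card_sub_filter H (fun g' => (Nat.card ↥(A ∩ coset H' (g + g')) : ℝ) ≤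
      3 / 4 * dens A H g * (Nat.card ↥H' : ℝ))]
    simp only [card_inter_coset, ← card_subF]
    rw [le_div_iff₀ hH]
    exact hc.le

lemma rep_le_triCount {n : ℕ} (A : Set (G n)) (S Q : Finset (G n)) (hS : S ⊆ A.toFinset)
    (hQ : Q ⊆ A.toFinset) : ∑ x ∈ S, rep A.toFinset Q x ≤ (triCount A : ℝ) := by
  unfold rep
  rw [← Finset.sum_product' S Q (fun x y => if x + y ∈ A.toFinset then (1 : ℝ) else 0),
    ← Finset.sum_filter, Finset.sum_const, nsmul_eq_mul, mul_one]
  unfold triCount triBetween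
  rw [Nat.card_eq_fintype_card, Fintype.card_subtype]
  norm_cast
  refine Finset.card_le_card_of_injOn (fun p => (p.1, p.2, p.1 + p.2)) ?_ ?_
  · rintro ⟨x, y⟩ hxy
    have hxy := Finset.mem_filter.1 hxy
    obtain ⟨h1, h2⟩ := hxy
    rw [Finset.mem_product] at h1
    have ha := Set.mem_toFinset.1 (hS h1.1)
    have hb := Set.mem_toFinset.1 (hQ h1.2)
    have hc := Set.mem_toFinset.1 h2
    simp only [Finset.coe_filter, Finset.mem_univ, true_and, Set.mem_ofPred_eq]
    exact ⟨ha, hb, hc, g_add_self _⟩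
  · rintro ⟨x, y⟩ _ ⟨x', y'⟩ _ h
    simp only [Prod.mk.injEq] at h
    exact Prod.ext h.1 h.2.1

lemma rep_nonneg {n : ℕ} (AF Q : Finset (G n)) (x : G n) : 0 ≤ rep AF Q x := by
  unfold rep
  refine Finset.sum_nonneg fun y _ => ?_
  split_ifs <;> norm_num

lemma card_cosF_le {n : ℕ} (H : AddSubgroup (G n)) (g : G n) :
    (cosF H g).card ≤ (subF H).card := by
  refine Finset.card_le_card_of_injOn (fun u => u + g) ?_ ?_
  · intro u hu; exact mem_subF.2 (mem_cosF.1 hu)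
  · intro a _ b _ hab; exact add_right_cancel hab

lemma dens_eq {n : ℕ} (A : Set (G n)) (H : AddSubgroup (G n)) (g : G n) :
    dens A H g = ((A.toFinset ∩ cosF H g).card : ℝ) / (subF H).card := by
  rw [dens, card_inter_coset, card_subF]

lemma dens_nonneg {n : ℕ} (A : Set (G n)) (H : AddSubgroup (G n)) (g : G n) :
    0 ≤ dens A H g := by unfold dens; positivity

lemma inter_cosF_le {n : ℕ} (B : Finset (G n)) (H : AddSubgroup (G n)) (g : G n) :
    ((B ∩ cosF H g).card : ℝ) ≤ (subF H).card := by
  exact_mod_cast (Finset.card_le_card Finset.inter_subset_right).trans (card_cosF_le H g)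

lemma dens_le_one {n : ℕ} (A : Set (G n)) (H : AddSubgroup (G n)) (g : G n) :
    dens A H g ≤ 1 := by
  rw [dens_eq, div_le_one (subF_pos H)]
  exact inter_cosF_le _ _ _

lemma greedy {n : ℕ} (H : AddSubgroup (G n)) (A : Set (G n)) (g₁ g₂ g₃ : G n)
    (hg : g₁ + g₂ + g₃ = 0) (h1 : 0 < dens A H g₁) (h2 : 0 < dens A H g₂) (h3 : 0 < dens A H g₃)
    (hns : ∀ H' : AddSubgroup (G n), H' ≤ H →
      ¬ Shatters H' H A g₂ (1 / 20) (3 / 4) (Real.log (2 / dens A H g₁) /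
        Real.log (1 + dens A H g₂ * dens A H g₃ / 4)) ∧
      ¬ Shatters H' H A g₃ (1 / 20) (3 / 4) (Real.log (2 / dens A H g₁) /
        Real.log (1 + dens A H g₂ * dens A H g₃ / 4))) :
    ∀ (N : ℕ) (B : Finset (G n)), B.card ≤ N → B ⊆ cosF H g₁ →
      27 / 80 * (dens A H g₂ * dens A H g₃) * (subF H).card *
        (B.card - dens A H g₁ / 2 * (subF H).card)
        ≤ ∑ x ∈ B, rep A.toFinset (A.toFinset ∩ cosF H g₂) x := by
  have hH := subF_pos H
  set d₁ := dens A H g₁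
  set d₂ := dens A H g₂ with hd2
  set d₃ := dens A H g₃ with hd3
  have htriv : ∀ B : Finset (G n), (B.card : ℝ) ≤ d₁ / 2 * (subF H).card →
      27 / 80 * (d₂ * d₃) * (subF H).card * (B.card - d₁ / 2 * (subF H).card)
        ≤ ∑ x ∈ B, rep A.toFinset (A.toFinset ∩ cosF H g₂) x := by
    intro B hB
    refine le_trans ?_ (Finset.sum_nonneg fun x _ => rep_nonneg _ _ x)
    exact mul_nonpos_of_nonneg_of_nonpos (by positivity) (by linarith)
  intro N
  induction N with
  | zero =>
    intro B hB _
    apply htriv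
    have : B.card = 0 := by omega
    rw [this]; push_cast; positivity
  | succ N ih =>
    intro B hBN hB
    by_cases hlt : (B.card : ℝ) ≤ d₁ / 2 * (subF H).card
    · exact htriv B hlt
    push Not at hlt
    have hBi : B ∩ cosF H g₁ = B := Finset.inter_eq_left.2 hB
    have hρ : 0 < d₂ * d₃ / 4 := by positivity
    obtain ⟨H', p, m, hle, hp, hm, hden, hreg⟩ := increment B (d₂ * d₃ / 4) hρ _ H g₁ (d₁ / 2)
      le_rfl (by positivity) (by rw [hBi]; exact hlt.le)
    have hH' := subF_pos H'
    have hmk : (m : ℝ) ≤ Real.log (2 / d₁) / Real.log (1 + d₂ * d₃ / 4) := by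
      have hlog : 0 < Real.log (1 + d₂ * d₃ / 4) := Real.log_pos (by linarith)
      rw [le_div_iff₀ hlog, ← Real.log_pow]
      refine Real.log_le_log (by positivity) ?_
      have := hden.trans (inter_cosF_le B H' p)
      have h5 : (1 + d₂ * d₃ / 4) ^ m * (d₁ / 2) ≤ 1 := by
        by_contra! hc
        have := mul_lt_mul_of_pos_right hc hH'
        linarith
      rw [le_div_iff₀ h1]; linarith
    set P := B ∩ cosF H' p with hPdef
    have hpc := piece H H' hle A.toFinset P g₁ g₂ g₃ p hg hp Finset.inter_subset_right d₂ d₃ h2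
      (dens_le_one _ _ _) h3 (dens_le_one _ _ _) hreg
      (bad_of_not_shatters H H' A g₂ _ m hm hmk (hns H' hle).1)
      (bad_of_not_shatters H H' A g₃ _ m hm hmk (hns H' hle).2)
    have hPpos : (0 : ℝ) < P.card := lt_of_lt_of_le (by positivity) hden
    have hPpos' : 0 < P.card := by exact_mod_cast hPpos
    have hPB : P ⊆ B := Finset.inter_subset_left
    have hcard := Finset.card_sdiff_add_card_eq_card hPB
    have hcard' : ((B \ P).card : ℝ) + P.card = B.card := by exact_mod_cast hcard
    have hih := ih (B \ P) (by omega) (Finset.sdiff_subset.trans hB)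
    rw [← Finset.sum_sdiff hPB, ← hcard']
    linarith

theorem shattering_lemma {n : ℕ} (H : AddSubgroup (G n)) (g₁ g₂ g₃ : G n)
    (hg : g₁ + g₂ + g₃ = 0) (A : Set (G n)) (d₁ d₂ d₃ ρ : ℝ)
    (hd₁ : d₁ = dens A H g₁) (hd₂ : d₂ = dens A H g₂) (hd₃ : d₃ = dens A H g₃)
    (hρ : ρ = d₂ * d₃ / 4) :
    (1 / 8 * (d₁ * d₂ * d₃) * (Nat.card ↥H : ℝ) ^ 2 ≤ (triCount A : ℝ)) ∨
    ∃ H' : AddSubgroup (G n), H' ≤ H ∧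
      (Shatters H' H A g₂ (1 / 20) (3 / 4) (Real.log (2 / d₁) / Real.log (1 + ρ)) ∨
       Shatters H' H A g₃ (1 / 20) (3 / 4) (Real.log (2 / d₁) / Real.log (1 + ρ))) := by
  by_cases hz : d₁ * d₂ * d₃ = 0
  · left; rw [hz]; simp
  have h1 : 0 ≤ d₁ := hd₁ ▸ dens_nonneg _ _ _
  have h2 : 0 ≤ d₂ := hd₂ ▸ dens_nonneg _ _ _
  have h3 : 0 ≤ d₃ := hd₃ ▸ dens_nonneg _ _ _
  simp only [mul_eq_zero, not_or] at hz
  have h1 : 0 < d₁ := lt_of_le_of_ne h1 (Ne.symm hz.1.1)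
  have h2 : 0 < d₂ := lt_of_le_of_ne h2 (Ne.symm hz.1.2)
  have h3 : 0 < d₃ := lt_of_le_of_ne h3 (Ne.symm hz.2)
  rw [or_iff_not_imp_right]
  intro hno
  push Not at hno
  have hH := subF_pos H
  subst hρ
  have hmain := greedy H A g₁ g₂ g₃ hg (hd₁ ▸ h1) (hd₂ ▸ h2) (hd₃ ▸ h3)
    (by rw [← hd₁, ← hd₂, ← hd₃]; exact hno) _ (A.toFinset ∩ cosF H g₁) le_rfl
    Finset.inter_subset_right
  rw [← hd₁, ← hd₂, ← hd₃] at hmain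
  have hc : ((A.toFinset ∩ cosF H g₁).card : ℝ) = d₁ * (subF H).card := by
    rw [hd₁, dens_eq, div_mul_cancel₀ _ hH.ne']
  rw [hc] at hmain
  have hfin := hmain.trans (rep_le_triCount A _ _ Finset.inter_subset_left
    Finset.inter_subset_left)
  rw [← card_subF]
  refine le_trans ?_ hfin
  have : 0 < d₁ * d₂ * d₃ * ((subF H).card : ℝ) ^ 2 := by positivity
  nlinarith
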